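/- arXiv:2204.01158 — 2 statements merged into one kernel-verified Lean document; each statement's English description precedes it below -/
import Mathlib

section
/- Let J be an antichain on V consisting of sets of size at least 2 with ⋃J = V, and let I = {v : ∃u∈J, v ⊆ u} be the simplicial complex generated by J. Let S be a regular I-system of difference fields on V over A. For each u ∈ J let τ_u : S(u) → S(u) be a ring homomorphism with τ_u = σ on S(u)^- = ∏_{v∈P(u)^-} S(v). Then there exists a ring homomorphism τ from the compositum ∏_{u∈J} S(u) · ∏_{v∈I\J} S(v)^{alg} to K such that τ restricts to τ_u on S(u) for every u ∈ J and τ = σ on ∏_{v∈I\J} S(v)^{alg}; in particular the τ_u admit a common extension to S(V). (The Claim in the proof of the Stochastic Independence Theorem.) -/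
/-- Subfields `E` and `F` of `K` containing `C` are linearly disjoint over `C`
if the multiplication map `E ⊗[C] F → K` is injective. -/
def LinearDisjointOver {K : Type*} [Field K] (C E F : Subfield K) : Prop :=
  (Submodule.span C (E : Set K)).LinearDisjoint (Submodule.span C (F : Set K))

/-- The relative algebraic closure `E^{alg}` of a subfield `E` inside `K`. -/
def algCl {K : Type*} [Field K] (E : Subfield K) : Subfield K :=
  Subfield.closure {x : K | IsAlgebraic E x}

/-- The inversive closure `E^{inv}`: the smallest subfield of `K` containing `E`
closed under `σ` and `σ⁻¹`. -/
def invCl {K : Type*} [Field K] (σ : K ≃+* K) (E : Subfield K) : Subfield K :=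
  sInf {F : Subfield K | E ≤ F ∧ (∀ x ∈ F, σ x ∈ F) ∧ ∀ x ∈ F, σ.symm x ∈ F}

/-- `E` and `F` are independent over `C`: `((E·C)^{inv})^{alg}` and
`((F·C)^{inv})^{alg}` are linearly disjoint over `(C^{inv})^{alg}`. -/
def IndependentOver {K : Type*} [Field K] (σ : K ≃+* K) (C E F : Subfield K) : Prop :=
  LinearDisjointOver (algCl (invCl σ C)) (algCl (invCl σ (E ⊔ C))) (algCl (invCl σ (F ⊔ C)))

/-- `F ≤ E` and `E/F` is a finite Galois extension (of subfields of `K`). -/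
def IsFiniteGaloisExt {K : Type*} [Field K] (F E : Subfield K) : Prop :=
  ∃ h : F ≤ E,
    letI : Algebra F E := (Subfield.inclusion h).toAlgebra
    FiniteDimensional F E ∧ IsGalois F E

/-- `I_u = {v ∩ u : v ∈ I}`. -/
def interFamily {V : Type*} [DecidableEq V] (I : Set (Finset V)) (u : Finset V) :
    Set (Finset V) :=
  {w | ∃ v ∈ I, w = v ∩ u}

/-- A system of difference fields on `V` over `A` inside `(K, σ)`. -/
structure DiffFieldSystem {K : Type*} [Field K] (σ : K ≃+* K)
    (V : Type*) [Fintype V] [DecidableEq V] (A : Subfield K) where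
  /-- the underlying map from subsets of `V` to subfields of `K` -/
  S : Finset V → Subfield K
  mono : ∀ {u v : Finset V}, u ⊆ v → S u ≤ S v
  empty_eq : S ∅ = A
  sigma_stable : ∀ u : Finset V, ∀ x ∈ S u, σ x ∈ S u
  perfect : ∀ u : Finset V, PerfectField (S u)
  /-- each `S u` has finite transcendence degree over `A` -/
  fin_trdeg : ∀ u : Finset V, ∃ t : Finset K,
    ∀ x ∈ S u, IsAlgebraic ↥(A ⊔ Subfield.closure (t : Set K)) x
  /-- each `S u` is the perfect closure of a difference subfield generated over
  `A` by a finite set (i.e. the smallest perfect `σ`-stable subfield of `K`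
  containing `A` and that finite set) -/
  fin_gen : ∀ u : Finset V, ∃ t : Finset K,
    (A ≤ S u ∧ (t : Set K) ⊆ S u) ∧
    ∀ F : Subfield K, A ≤ F → (t : Set K) ⊆ F → (∀ x ∈ F, σ x ∈ F) →
      PerfectField F → S u ≤ F
  /-- the family `(S {i})_{i ∈ V}` is independent over `A` -/
  indep : ∀ I₁ I₂ : Finset V, Disjoint I₁ I₂ →
    IndependentOver σ A (A ⊔ ⨆ i ∈ I₁, S {i}) (A ⊔ ⨆ i ∈ I₂, S {i})
  /-- for `|u| ≥ 2`, `S u` is a finite Galois extension of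
  `S(u)⁻ = ∏_{v ∈ P(u)⁻} S v` -/
  galois : ∀ u : Finset V, 2 ≤ u.card →
    IsFiniteGaloisExt (⨆ v ∈ u.powerset.erase u, S v) (S u)

namespace DiffFieldSystem

variable {K : Type*} [Field K] {σ : K ≃+* K}
variable {V : Type*} [Fintype V] [DecidableEq V] {A : Subfield K}

/-- `S(u)⁻ = ∏_{v ∈ P(u)⁻} S(v)`. -/
def Sminus (𝒮 : DiffFieldSystem σ V A) (u : Finset V) : Subfield K :=
  ⨆ v ∈ u.powerset.erase u, 𝒮.S v

/-- `𝒮` is an `I`-system: `S u = S(u)⁻` for `u ∉ I`. -/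
def IsOn (𝒮 : DiffFieldSystem σ V A) (I : Set (Finset V)) : Prop :=
  ∀ u : Finset V, u ∉ I → 𝒮.S u = 𝒮.Sminus u

/-- `𝒮` is regular: for every nonempty `u`, `S u` is linearly disjoint from
`∏_{v ∈ P(u)⁻} S(v)^{alg}` over `∏_{v ∈ P(u)⁻} S(v)`. -/
def Regular (𝒮 : DiffFieldSystem σ V A) : Prop :=
  ∀ u : Finset V, u ≠ ∅ →
    LinearDisjointOver (𝒮.Sminus u) (𝒮.S u) (⨆ v ∈ u.powerset.erase u, algCl (𝒮.S v))

end DiffFieldSystem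

/-- `I` is a simplicial complex on `V`: downward closed with union all of `V`. -/
def IsSimplicialComplexOn (V : Type*) [DecidableEq V] (I : Set (Finset V)) : Prop :=
  (∀ u ∈ I, ∀ v : Finset V, v ⊆ u → v ∈ I) ∧ ∀ i : V, ∃ u ∈ I, i ∈ u

universe u v

/-!
By regularity, the `τ_u` and `σ` can be glued one `u` at a time as soon as `S(u)^{alg}` is linearly
disjoint from `∏_{u ⊄ w} S(w)^{alg}` over `∏_{v ⊊ u} S(v)^{alg}`. Put `k = S(∅)^{alg}`,
`P = S(u)^{alg}` and `Q = k · ∏_{i ∉ u} S({i})`. Since `k` is algebraically closed, finitely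
generated `k`-subalgebras of `Q` have `k`-points, and these assemble to a homomorphism from `Q` to
an ultrapower `k^U`. As `P` and `Q` are linearly disjoint over `k`, it extends to an embedding `ψ`
of `K` into an extension of `K^U` which is diagonal on `P`. The field `(S(w ∩ u)^{alg})^U` is
algebraically closed and contains the images under `ψ` of `S(w ∩ u)` and of `S({i})` for
`i ∈ w \ u`, hence that of `S(w)^{alg}`. So `ψ` maps `∏_{u ⊄ w} S(w)^{alg}` into the ultrapower of
`∏_{v ⊊ u} S(v)^{alg}`, and elements of `P` that are linearly independent over a field `E` remain
so over `E^U`.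
-/

section LinearDisjointness

variable {K : Type*} [Field K] {C D E E' F N : Subfield K}

theorem linearDisjointOver_iff (hE : C ≤ E) (hF : C ≤ F) :
    LinearDisjointOver C E F ↔
      (Subfield.extendScalars hE).LinearDisjoint (Subfield.extendScalars hF) := by
  have span_eq {G : Subfield K} (hG : C ≤ G) : Submodule.span C (G : Set K) =
      Subalgebra.toSubmodule (Subfield.extendScalars hG).toSubalgebra :=
    Submodule.span_eq (Subalgebra.toSubmodule (Subfield.extendScalars hG).toSubalgebra)
  rw [LinearDisjointOver, span_eq hE, span_eq hF, IntermediateField.linearDisjoint_iff',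
    Subalgebra.linearDisjoint_iff]

theorem LinearDisjointOver.linearIndependent {ι : Type*} {v : ι → K}
    (h : LinearDisjointOver C E F) (hE : C ≤ E) (hF : C ≤ F) (hvE : ∀ i, v i ∈ E)
    (hv : LinearIndependent C v) : LinearIndependent F v := by
  have hv' : LinearIndependent C fun i => (⟨v i, hvE i⟩ : Subfield.extendScalars hE) :=
    hv.of_comp (Subfield.extendScalars hE).val.toLinearMap
  exact ((linearDisjointOver_iff hE hF).1 h).linearIndependent_left hv'

theorem linearDisjointOver_iff_linearIndependent {K : Type u} [Field K] {C E F : Subfield K}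
    (hE : C ≤ E) (hF : C ≤ F) :
    LinearDisjointOver C E F ↔ ∀ (ι : Type u) (v : ι → K), (∀ i, v i ∈ E) →
      LinearIndependent C v → LinearIndependent F v := by
  refine ⟨fun h ι v hvE hv => h.linearIndependent hE hF hvE hv, fun h => ?_⟩
  let b := Module.Basis.ofVectorSpace C (Subfield.extendScalars hE)
  refine (linearDisjointOver_iff hE hF).2 (.of_basis_left b ?_)
  exact h _ _ (fun i => (b i).2) (b.linearIndependent.map'
    (Subfield.extendScalars hE).val.toLinearMap (LinearMap.ker_eq_bot.2 Subtype.val_injective))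

theorem linearIndependent_of_ringHom_comp {M : Type*} [Field M] {F : Subfield M} {ι : Type*}
    {v : ι → K} (ψ : K →+* M) (hψ : E ≤ F.comap ψ) (hv : LinearIndependent F (ψ ∘ v)) :
    LinearIndependent E v := by
  rw [linearIndependent_iff'] at hv ⊢
  intro s c hc i hi
  have relation : ∑ j ∈ s, (⟨ψ (c j), hψ (c j).2⟩ : F) • ψ (v j) = 0 := by
    simpa [Subfield.smul_def] using congrArg ψ hc
  have hci := congrArg Subtype.val (hv s _ relation i hi)
  simpa using hci

theorem LinearDisjointOver.mono (h : LinearDisjointOver C E F) (hE' : C ≤ E') (hN : C ≤ N)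
    (hE : E' ≤ E) (hNF : N ≤ F) : LinearDisjointOver C E' N :=
  (linearDisjointOver_iff_linearIndependent hE' hN).2 fun _ _ hvE hv =>
    linearIndependent_of_ringHom_comp (RingHom.id K) hNF
      (h.linearIndependent (hE'.trans hE) (hN.trans hNF) (fun i => hE (hvE i)) hv)

theorem LinearDisjointOver.trans (hD : LinearDisjointOver C E D) (hN : LinearDisjointOver D E' N)
    (hCE : C ≤ E) (hCD : C ≤ D) (hDE' : D ≤ E') (hDN : D ≤ N) (hEE' : E ≤ E') :
    LinearDisjointOver C E N :=
  (linearDisjointOver_iff_linearIndependent hCE (hCD.trans hDN)).2 fun _ _ hvE hv =>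
    hN.linearIndependent hDE' hDN (fun i => hEE' (hvE i)) (hD.linearIndependent hCE hCD hvE hv)

end LinearDisjointness

section AlgebraicClosure

variable {K : Type*} [Field K] {E F : Subfield K}

theorem algCl_eq_algebraicClosure (E : Subfield K) :
    algCl E = (algebraicClosure E K).toSubfield :=
  le_antisymm (Subfield.closure_le.2 fun _ hx => mem_algebraicClosure_iff.2 hx)
    fun _ hx => Subfield.subset_closure (mem_algebraicClosure_iff.1 hx)

theorem mem_algCl {x : K} : x ∈ algCl E ↔ IsAlgebraic E x := by
  rw [algCl_eq_algebraicClosure]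
  exact mem_algebraicClosure_iff

theorem le_algCl (E : Subfield K) : E ≤ algCl E := fun x hx =>
  mem_algCl.2 (isAlgebraic_algebraMap (⟨x, hx⟩ : E))

theorem algCl_mono : Monotone (algCl (K := K)) := fun _ _ h _ hx =>
  mem_algCl.2 ((mem_algCl.1 hx).ringHom_of_comp_eq (Subfield.inclusion h) (RingHom.id K)
    (RingHom.injective _) rfl)

theorem algCl_algCl (E : Subfield K) : algCl (algCl E) = algCl E := by
  refine le_antisymm (fun x hx => ?_) (le_algCl _)
  rw [mem_algCl, algCl_eq_algebraicClosure] at hx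
  have hx' : IsAlgebraic (algebraicClosure E K) x := hx
  exact mem_algCl.2 (hx'.restrictScalars E)

theorem algCl_le_algCl_iff : algCl E ≤ algCl F ↔ E ≤ algCl F :=
  ⟨(le_algCl E).trans, fun h => (algCl_mono h).trans_eq (algCl_algCl F)⟩

instance isAlgClosed_algCl [IsAlgClosed K] (E : Subfield K) : IsAlgClosed (algCl E) := by
  rw [algCl_eq_algebraicClosure]
  exact IsAlgClosure.isAlgClosed (K := algebraicClosure E K) E

theorem algCl_eq_self [IsAlgClosed E] : algCl E = E := by
  refine le_antisymm (fun x hx => ?_) (le_algCl E)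
  have hx : IsIntegral E x := (mem_algCl.1 hx).isIntegral
  obtain ⟨y, rfl⟩ := minpoly.mem_range_of_degree_eq_one E x
    (IsAlgClosed.degree_eq_one_of_irreducible E (minpoly.irreducible hx))
  exact y.2

theorem algCl_le_comap {M : Type*} [Field M] (ψ : K →+* M) {F : Subfield M} [IsAlgClosed F]
    (h : E ≤ F.comap ψ) : algCl E ≤ F.comap ψ := fun x hx => by
  have hψx : IsAlgebraic F (ψ x) :=
    (mem_algCl.1 hx).ringHom_of_comp_eq ((ψ.comp E.subtype).codRestrict F fun y => h y.2) ψ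
      (RingHom.injective _) rfl
  exact (algCl_eq_self (E := F)).le (mem_algCl.2 hψx)

end AlgebraicClosure

section Gluing

variable {K L : Type*} [Field K] [Field L]

open scoped TensorProduct

theorem LinearDisjointOver.exists_ringHom_sup {C E F : Subfield K}
    (h : LinearDisjointOver C E F) (hE : C ≤ E) (hF : C ≤ F) (halg : E ≤ algCl C)
    (f : E →+* L) (g : F →+* L) (hfg : ∀ x (hx : x ∈ C), f ⟨x, hE hx⟩ = g ⟨x, hF hx⟩) :
    ∃ φ : ↥(E ⊔ F) →+* L, (∀ x hx hx', φ ⟨x, hx⟩ = f ⟨x, hx'⟩) ∧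
      ∀ x hx hx', φ ⟨x, hx⟩ = g ⟨x, hx'⟩ := by
  let E' := Subfield.extendScalars hE
  let F' := Subfield.extendScalars hF
  have disjoint : E'.toSubalgebra.LinearDisjoint F'.toSubalgebra :=
    IntermediateField.linearDisjoint_iff'.1 ((linearDisjointOver_iff hE hF).1 h)
  have : Algebra.IsAlgebraic C E' :=
    ⟨fun x => (isAlgebraic_algebraMap_iff (A := K) Subtype.val_injective).1
      (mem_algCl.1 (halg x.2))⟩
  have mem_sup (x : ↥(E ⊔ F)) : (x : K) ∈ E'.toSubalgebra ⊔ F'.toSubalgebra := by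
    rw [← IntermediateField.sup_toSubalgebra_of_isAlgebraic_left, Subfield.extendScalars_sup]
    exact x.2
  let : Algebra C L := (f.comp (Subfield.inclusion hE)).toAlgebra
  let f' : E'.toSubalgebra →ₐ[C] L := { f with commutes' := fun _ => rfl }
  let g' : F'.toSubalgebra →ₐ[C] L := { g with commutes' := fun c => (hfg c c.2).symm }
  let toTensor : ↥(E ⊔ F) →+* E'.toSubalgebra ⊗[C] F'.toSubalgebra :=
    (disjoint.mulMap.symm : _ →+* _).comp ((E ⊔ F).subtype.codRestrict _ mem_sup)
  have toTensor_left (x : K) (hx : x ∈ E) (hx' : x ∈ E ⊔ F) :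
      toTensor ⟨x, hx'⟩ = (⟨x, hx⟩ : E'.toSubalgebra) ⊗ₜ 1 :=
    disjoint.mulMap.symm_apply_eq.2 (Subtype.ext (mul_one x).symm)
  have toTensor_right (x : K) (hx : x ∈ F) (hx' : x ∈ E ⊔ F) :
      toTensor ⟨x, hx'⟩ = 1 ⊗ₜ (⟨x, hx⟩ : F'.toSubalgebra) :=
    disjoint.mulMap.symm_apply_eq.2 (Subtype.ext (one_mul x).symm)
  refine ⟨(Algebra.TensorProduct.productMap f' g' : _ →+* L).comp toTensor,
    fun x hx hx' => ?_, fun x hx hx' => ?_⟩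
  · rw [RingHom.comp_apply, toTensor_left x hx']
    exact Algebra.TensorProduct.productMap_left_apply f' g' _
  · rw [RingHom.comp_apply, toTensor_right x hx']
    exact Algebra.TensorProduct.productMap_right_apply f' g' _

theorem exists_ringHom_biSup_sup {ι : Type*} [DecidableEq ι] {s : Finset ι}
    {C E : ι → Subfield K} {N : Subfield K} (hCE : ∀ i ∈ s, C i ≤ E i) (hCN : ∀ i ∈ s, C i ≤ N)
    (halg : ∀ i ∈ s, E i ≤ algCl (C i))
    (hdisj : ∀ i ∈ s, LinearDisjointOver (C i) (E i) ((⨆ j ∈ s.erase i, E j) ⊔ N))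
    (f : N →+* L) (τ : ∀ i ∈ s, E i →+* L)
    (hτ : ∀ i hi x (hx : x ∈ C i), τ i hi ⟨x, hCE i hi hx⟩ = f ⟨x, hCN i hi hx⟩) :
    ∃ φ : ↥((⨆ i ∈ s, E i) ⊔ N) →+* L, (∀ i hi x hx hx', φ ⟨x, hx⟩ = τ i hi ⟨x, hx'⟩) ∧
      ∀ x hx hx', φ ⟨x, hx⟩ = f ⟨x, hx'⟩ := by
  induction s using Finset.induction_on with
  | empty =>
    refine ⟨f.comp (Subfield.inclusion (sup_le (by simp) le_rfl)), by simp, fun _ _ _ => rfl⟩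
  | insert i s hi ih =>
    have hs {j : ι} (hj : j ∈ s) : j ∈ insert i s := Finset.mem_insert_of_mem hj
    have hi' : i ∈ insert i s := Finset.mem_insert_self i s
    obtain ⟨φ, hφτ, hφf⟩ := ih (fun j hj => hCE j (hs hj)) (fun j hj => hCN j (hs hj))
      (fun j hj => halg j (hs hj))
      (fun j hj => (hdisj j (hs hj)).mono (hCE j (hs hj)) (le_sup_of_le_right (hCN j (hs hj)))
        le_rfl (sup_le_sup_right (biSup_mono fun l hl =>
          Finset.erase_subset_erase j (Finset.subset_insert i s) hl) N))
      (fun j hj => τ j (hs hj)) (fun j hj => hτ j (hs hj))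
    have hdisj_i := hdisj i hi'
    rw [Finset.erase_insert hi] at hdisj_i
    obtain ⟨ψ, hψτ, hψφ⟩ := hdisj_i.exists_ringHom_sup (hCE i hi')
      (le_sup_of_le_right (hCN i hi')) (halg i hi') (τ i hi') φ
      (fun x hx => (hτ i hi' x hx).trans (hφf x _ _).symm)
    have hle : (⨆ j ∈ insert i s, E j) ⊔ N ≤ E i ⊔ ((⨆ j ∈ s, E j) ⊔ N) := by
      rw [Finset.iSup_insert, sup_assoc]
    refine ⟨ψ.comp (Subfield.inclusion hle), fun j hj x _ hx => ?_, fun x _ hx => ?_⟩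
    · rcases Finset.mem_insert.1 hj with rfl | hj
      · exact hψτ x _ hx
      · have hxs : x ∈ (⨆ j ∈ s, E j) ⊔ N :=
          le_sup_of_le_left (le_iSup₂ (f := fun j _ => E j) j hj) hx
        exact (hψφ x _ hxs).trans (hφτ j hj x hxs hx)
    · have hxN : x ∈ (⨆ j ∈ s, E j) ⊔ N := (le_sup_right : N ≤ _) hx
      exact (hψφ x _ hxN).trans (hφf x hxN hx)

end Gluing

section Ultrapower

open Filter

variable {ι R S k K : Type*} [CommRing R] [CommRing S] [Field k] [Field K]

/-- The ultrapower of `R` along `U`, encoded as the germs along `U` of functions into `R`. -/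
abbrev Ultrapower (U : Ultrafilter ι) (R : Type*) : Type _ := Germ (U : Filter ι) R

/-- The map of ultrapowers induced by a ring homomorphism. -/
def ultrapowerMap (U : Ultrafilter ι) (f : R →+* S) : Ultrapower U R →+* Ultrapower U S where
  toFun := Germ.map f
  map_one' := congrArg _ (funext fun _ => map_one f)
  map_zero' := congrArg _ (funext fun _ => map_zero f)
  map_mul' x y := Germ.inductionOn₂ x y fun _ _ => congrArg _ (funext fun _ => map_mul f _ _)
  map_add' x y := Germ.inductionOn₂ x y fun _ _ => congrArg _ (funext fun _ => map_add f _ _)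

/-- The diagonal embedding of a ring into its ultrapower. -/
def ultrapowerConst (U : Ultrafilter ι) (R : Type*) [CommRing R] : R →+* Ultrapower U R :=
  (Germ.coeRingHom (U : Filter ι)).comp (Pi.constRingHom ι R)

variable (U : Ultrafilter ι)

/-- The ultrapower of a subfield `E` of `K`, as a subfield of the ultrapower of `K`. -/
def ultrapowerSubfield (E : Subfield K) : Subfield (Ultrapower U K) :=
  (ultrapowerMap U E.subtype).fieldRange

variable {U}

theorem mem_ultrapowerSubfield {E : Subfield K} {x : Ultrapower U K} :
    x ∈ ultrapowerSubfield U E ↔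
      ∃ r : ι → E, x = ((fun t => (r t : K) : ι → K) : Ultrapower U K) := by
  constructor
  · rintro ⟨y, rfl⟩
    induction y using Germ.inductionOn with
    | _ r => exact ⟨r, rfl⟩
  · rintro ⟨r, rfl⟩
    exact ⟨(r : Ultrapower U E), rfl⟩

theorem ultrapowerSubfield_mono : Monotone (ultrapowerSubfield (K := K) U) := fun E F h x hx => by
  obtain ⟨r, rfl⟩ := mem_ultrapowerSubfield.1 hx
  exact mem_ultrapowerSubfield.2 ⟨fun t => ⟨r t, h (r t).2⟩, rfl⟩

theorem ultrapowerConst_mem_ultrapowerSubfield {E : Subfield K} {x : K} (hx : x ∈ E) :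
    ultrapowerConst U K x ∈ ultrapowerSubfield U E :=
  mem_ultrapowerSubfield.2 ⟨fun _ => ⟨x, hx⟩, rfl⟩

theorem linearIndependent_ultrapowerConst_comp {E : Subfield K} {κ : Type*} {v : κ → K}
    (hv : LinearIndependent E v) :
    LinearIndependent (ultrapowerSubfield U E) (ultrapowerConst U K ∘ v) := by
  rw [linearIndependent_iff'] at hv ⊢
  intro s c hc i hi
  choose r hr using fun j => mem_ultrapowerSubfield.1 (c j).2
  have relation : Germ.coeRingHom (U : Filter ι) (∑ j ∈ s, fun t => (r j t : K) * v j) = 0 := by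
    rw [map_sum, ← hc]
    refine Finset.sum_congr rfl fun j _ => ?_
    rw [Subfield.smul_def, hr]
    rfl
  have pointwise : ∀ᶠ t in (U : Filter ι), ∑ j ∈ s, (r j t : K) * v j = 0 :=
    (Germ.coe_eq.1 relation).mono fun t ht => by simpa using ht
  refine Subtype.ext ((hr i).trans (Germ.coe_eq.2 (pointwise.mono fun t ht => ?_)))
  exact congrArg Subtype.val (hv s (fun j => r j t) ht i hi)

instance isAlgClosed_ultrapower [IsAlgClosed k] : IsAlgClosed (Ultrapower U k) := by
  refine IsAlgClosed.of_exists_root _ fun p hmonic hirr => ?_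
  have coe_surjective : Function.Surjective (Germ.coeRingHom (R := k) (U : Filter ι)) :=
    Quot.mk_surjective
  obtain ⟨q, rfl, hdeg, hq⟩ := Polynomial.lifts_and_natDegree_eq_and_monic
    (Polynomial.map_surjective _ coe_surjective p) hmonic
  have root (t : ι) : ∃ x, (q.map (Pi.evalRingHom (fun _ => k) t)).IsRoot x := by
    refine IsAlgClosed.exists_root _ (Polynomial.natDegree_pos_iff_degree_pos.1 ?_).ne'
    rw [hq.natDegree_map, hdeg]
    exact hirr.natDegree_pos
  choose x hx using root
  refine ⟨Germ.coeRingHom _ x, ?_⟩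
  rw [Polynomial.eval_map, Polynomial.eval₂_at_apply]
  have eval_eq_zero : q.eval x = 0 := funext fun t => by
    have := hx t
    rwa [Polynomial.IsRoot.def, Polynomial.eval_map, ← Pi.evalRingHom_apply (fun _ => k) t x,
      Polynomial.eval₂_at_apply] at this
  rw [eval_eq_zero, map_zero]

theorem isAlgClosed_map_ultrapowerSubfield {ι : Type u} {K : Type v} {M : Type max u v} [Field K]
    [Field M] {U : Ultrafilter ι} {E : Subfield K} [IsAlgClosed E] (j : Ultrapower U K →+* M) :
    IsAlgClosed ((ultrapowerSubfield U E).map j) := by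
  rw [ultrapowerSubfield, RingHom.map_fieldRange]
  exact IsAlgClosed.of_ringEquiv (Ultrapower U E) _ (RingHom.rangeRestrictFieldEquiv _)

end Ultrapower

section Points

open Filter

theorem nonempty_algHom_of_finiteType (k R : Type*) [Field k] [IsAlgClosed k] [CommRing R]
    [Nontrivial R] [Algebra k R] [Algebra.FiniteType k R] : Nonempty (R →ₐ[k] k) := by
  obtain ⟨m, hm⟩ := Ideal.exists_maximal R
  let := Ideal.Quotient.field m
  have := finite_of_finite_type_of_isJacobsonRing k (R ⧸ m)
  exact ⟨(IsAlgClosed.lift : (R ⧸ m) →ₐ[k] k).comp (Ideal.Quotient.mkₐ k m)⟩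

theorem exists_ringHom_ultrapower (k R : Type*) [Field k] [IsAlgClosed k] [CommRing R]
    [Nontrivial R] [Algebra k R] :
    ∃ (U : Ultrafilter (Finset R)) (φ : R →+* Ultrapower U k),
      ∀ c, φ (algebraMap k R c) = ultrapowerConst U k c := by
  classical
  let U : Ultrafilter (Finset R) := Ultrafilter.of atTop
  have point (T : Finset R) : Nonempty (Algebra.adjoin k (T : Set R) →ₐ[k] k) := by
    have : Algebra.FiniteType k (Algebra.adjoin k (T : Set R)) :=
      (Subalgebra.fg_iff_finiteType _).1 ⟨T, rfl⟩
    exact nonempty_algHom_of_finiteType k _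
  let θ (T : Finset R) := (point T).some
  let value (x : R) (T : Finset R) : k :=
    if h : x ∈ Algebra.adjoin k (T : Set R) then θ T ⟨x, h⟩ else 0
  have value_eq {x : R} {T : Finset R} (h : x ∈ Algebra.adjoin k (T : Set R)) :
      value x T = θ T ⟨x, h⟩ := dif_pos h
  have value_const (c : k) (T : Finset R) : value (algebraMap k R c) T = c :=
    (value_eq (Subalgebra.algebraMap_mem _ c)).trans ((θ T).commutes c)
  have eventually_mem (x : R) : ∀ᶠ T : Finset R in U, x ∈ Algebra.adjoin k (T : Set R) :=
    Ultrafilter.of_le atTop <| (eventually_ge_atTop {x}).mono fun T hT =>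
      Algebra.subset_adjoin (hT (Finset.mem_singleton_self x))
  let φ : R →+* Ultrapower U k :=
    { toFun x := (value x : Ultrapower U k)
      map_one' := congrArg _ (funext fun T => by simpa using value_const 1 T)
      map_zero' := congrArg _ (funext fun T => by simpa using value_const 0 T)
      map_mul' x y := Germ.coe_eq.2 <| by
        filter_upwards [eventually_mem x, eventually_mem y] with T hx hy
        change value (x * y) T = value x T * value y T
        rw [value_eq (mul_mem hx hy), value_eq hx, value_eq hy, ← map_mul]
        rfl
      map_add' x y := Germ.coe_eq.2 <| by
        filter_upwards [eventually_mem x, eventually_mem y] with T hx hy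
        change value (x + y) T = value x T + value y T
        rw [value_eq (add_mem hx hy), value_eq hx, value_eq hy, ← map_add]
        rfl }
  exact ⟨U, φ, fun c => congrArg _ (funext (value_const c))⟩

end Points

section Amalgamation

open scoped TensorProduct

theorem exists_field_amalgam {R : Type*} {K L : Type u} [CommRing R] [Field K] [Field L]
    {f : R →+* K} {g : R →+* L} (hf : Function.Injective f) (hg : Function.Injective g) :
    ∃ (M : Type u) (_ : Field M) (f' : K →+* M) (g' : L →+* M), ∀ x, f' (f x) = g' (g x) := by
  have : IsDomain R := hf.isDomain f
  let : Algebra R K := f.toAlgebra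
  let : Algebra R L := g.toAlgebra
  have := Algebra.TensorProduct.nontrivial_of_algebraMap_injective_of_isDomain R K L hf hg
  obtain ⟨m, hm⟩ := Ideal.exists_maximal (K ⊗[R] L)
  refine ⟨_, Ideal.Quotient.field m,
    (Ideal.Quotient.mk m).comp Algebra.TensorProduct.includeLeftRingHom,
    (Ideal.Quotient.mk m).comp
      (Algebra.TensorProduct.includeRight : L →ₐ[R] K ⊗[R] L).toRingHom, fun x => ?_⟩
  exact congrArg (Ideal.Quotient.mk m) (Algebra.TensorProduct.tmul_one_eq_one_tmul x)

theorem productMap_injective {k A B L κ : Type*} [CommRing k] [CommRing A] [Algebra k A]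
    [CommRing B] [Algebra k B] [Field L] [Algebra k L] (f : A →ₐ[k] L) {g : B →ₐ[k] L}
    (hg : Function.Injective g) {F : Subfield L} (hgF : ∀ y, g y ∈ F) (b : Module.Basis κ k A)
    (hf : LinearIndependent F (f ∘ b)) :
    Function.Injective (Algebra.TensorProduct.productMap f g) := by
  rw [injective_iff_map_eq_zero]
  intro x hx
  obtain ⟨c, rfl⟩ := TensorProduct.eq_repr_basis_left b x
  have relation : ∑ i ∈ c.support, (⟨g (c i), hgF _⟩ : F) • f (b i) = 0 := by
    simpa [Finsupp.sum, Subfield.smul_def, mul_comm] using hx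
  refine Finset.sum_eq_zero fun i hi => ?_
  have hgc : g (c i) = 0 := congrArg Subtype.val (linearIndependent_iff'.1 hf _ _ relation i hi)
  simp only [(map_eq_zero_iff g hg).1 hgc, TensorProduct.tmul_zero]

theorem linearIndependent_map_comp {K M κ : Type*} [Field K] [Field M] {F : Subfield K}
    {v : κ → K} (hv : LinearIndependent F v) (j : K →+* M) :
    LinearIndependent (F.map j) (j ∘ v) := by
  refine hv.map_of_surjective_injective ((j.comp F.subtype).codRestrict (F.map j) fun x =>
    ⟨x, x.2, rfl⟩) j.toAddMonoidHom ?_ (fun x => (map_eq_zero j).1) fun c x => map_mul j (c : K) x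
  rintro ⟨_, x, hx, rfl⟩
  exact ⟨⟨x, hx⟩, rfl⟩

theorem LinearDisjointOver.exists_coheir_embedding {K : Type u} [Field K] {k P Q : Subfield K}
    [IsAlgClosed k] (h : LinearDisjointOver k P Q) (hP : k ≤ P) (hQ : k ≤ Q) :
    ∃ (ι : Type u) (U : Ultrafilter ι) (M : Type u) (_ : Field M)
      (j : Ultrapower U K →+* M) (ψ : K →+* M),
      (∀ x ∈ P, ψ x = j (ultrapowerConst U K x)) ∧
      ∀ x ∈ Q, ψ x ∈ (ultrapowerSubfield U k).map j := by
  let P' := Subfield.extendScalars hP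
  let Q' := Subfield.extendScalars hQ
  obtain ⟨U, φ, hφ⟩ := exists_ringHom_ultrapower k Q'
  let : Algebra k (Ultrapower U K) := ((ultrapowerConst U K).comp k.subtype).toAlgebra
  let fP : P' →ₐ[k] Ultrapower U K :=
    { (ultrapowerConst U K).comp P.subtype with commutes' := fun _ => rfl }
  let fQ : Q' →ₐ[k] Ultrapower U K :=
    { (ultrapowerMap U k.subtype).comp φ with
      commutes' := fun c => congrArg (ultrapowerMap U k.subtype) (hφ c) }
  have fQ_mem (y : Q') : fQ y ∈ ultrapowerSubfield U k := ⟨φ y, rfl⟩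
  let b := Module.Basis.ofVectorSpace k P'
  have hb : LinearIndependent k fun i => (b i : K) := b.linearIndependent.map'
    P'.val.toLinearMap (LinearMap.ker_eq_bot.2 Subtype.val_injective)
  obtain ⟨M, _, ψ, j, hψ⟩ := exists_field_amalgam
    (f := (Algebra.TensorProduct.productMap P'.val Q'.val).toRingHom)
    (g := (Algebra.TensorProduct.productMap fP fQ).toRingHom)
    (productMap_injective P'.val Q'.val.injective (F := Q) (fun y => y.2) b
      (h.linearIndependent hP hQ (fun i => (b i).2) hb))
    (productMap_injective fP fQ.toRingHom.injective fQ_mem b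
      (linearIndependent_ultrapowerConst_comp hb))
  refine ⟨_, U, M, _, j, ψ, fun x hx => ?_, fun x hx => ⟨fQ ⟨x, hx⟩, fQ_mem _, ?_⟩⟩
  · have ψ_eq : ψ x = j (fP ⟨x, hx⟩) := by simpa using hψ ((⟨x, hx⟩ : P') ⊗ₜ 1)
    exact ψ_eq
  · simpa using (hψ (1 ⊗ₜ (⟨x, hx⟩ : Q'))).symm

theorem LinearDisjointOver.iSup_algCl {K : Type*} [Field K] {k P Q : Subfield K}
    [IsAlgClosed k] (h : LinearDisjointOver k P Q) (hkP : k ≤ P) (hkQ : k ≤ Q) {ι : Type*}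
    {F G : ι → Subfield K} [∀ i, IsAlgClosed (F i)] (hkF : ∀ i, k ≤ F i) (hFP : ∀ i, F i ≤ P)
    (hGQ : ∀ i, G i ≤ Q) :
    LinearDisjointOver (⨆ i, F i) P (⨆ i, algCl (F i ⊔ G i)) := by
  obtain ⟨κ, U, M, _, j, ψ, hψP, hψQ⟩ := h.exists_coheir_embedding hkP hkQ
  have map_mono {E E' : Subfield K} (hE : E ≤ E') :
      (ultrapowerSubfield U E).map j ≤ (ultrapowerSubfield U E').map j :=
    (Subfield.gc_map_comap j).monotone_l (ultrapowerSubfield_mono hE)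
  have algCl_le (i : ι) :
      algCl (F i ⊔ G i) ≤ ((ultrapowerSubfield U (F i)).map j).comap ψ := by
    have := isAlgClosed_map_ultrapowerSubfield (E := F i) j
    refine algCl_le_comap ψ (sup_le (fun x hx => ?_) fun x hx => ?_)
    · exact ⟨_, ultrapowerConst_mem_ultrapowerSubfield hx, (hψP x (hFP i hx)).symm⟩
    · exact map_mono (hkF i) (hψQ x (hGQ i hx))
  have ψ_mem : ⨆ i, algCl (F i ⊔ G i) ≤ ((ultrapowerSubfield U (⨆ i, F i)).map j).comap ψ :=
    iSup_le fun i => (algCl_le i).trans fun _ hx => map_mono (le_iSup F i) hx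
  have F_le : ⨆ i, F i ≤ ⨆ i, algCl (F i ⊔ G i) :=
    iSup_mono fun i => le_sup_left.trans (le_algCl _)
  refine (linearDisjointOver_iff_linearIndependent (iSup_le hFP) F_le).2 fun _ v hvP hv => ?_
  refine linearIndependent_of_ringHom_comp ψ ψ_mem ?_
  have ψ_comp : ψ ∘ v = j ∘ ultrapowerConst U K ∘ v := funext fun i => hψP _ (hvP i)
  rw [ψ_comp]
  exact linearIndependent_map_comp (K := Ultrapower U K) (M := M)
    (linearIndependent_ultrapowerConst_comp hv) j

end Amalgamation

section IndependentSystems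

variable {K V : Type*} [Field K] [DecidableEq V] {S : Finset V → Subfield K}

theorem le_algCl_iSup_singleton
    (halg : ∀ u, 2 ≤ u.card → S u ≤ algCl (⨆ v ∈ u.ssubsets, S v)) (w : Finset V) :
    S w ≤ algCl (S ∅ ⊔ ⨆ i ∈ w, S {i}) := by
  induction w using Finset.strongInduction with
  | H w ih =>
    obtain hw | hw | hw : w.card = 0 ∨ w.card = 1 ∨ 2 ≤ w.card := by omega
    · obtain rfl := Finset.card_eq_zero.1 hw
      exact le_sup_left.trans (le_algCl _)
    · obtain ⟨i, rfl⟩ := Finset.card_eq_one.1 hw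
      rw [Finset.iSup_singleton]
      exact le_sup_right.trans (le_algCl _)
    · refine (halg w hw).trans (algCl_le_algCl_iff.2 (iSup₂_le fun v hv => ?_))
      have hvw : v ⊂ w := Finset.mem_ssubsets.1 hv
      exact (ih v hvw).trans (algCl_mono (sup_le_sup_left (biSup_mono fun i hi => hvw.1 hi) _))

theorem le_iSup_of_eq_iSup_ssubsets {J : Finset (Finset V)} (hmono : Monotone S)
    (hS : ∀ u, (¬ ∃ v ∈ J, u ⊆ v) → S u = ⨆ v ∈ u.ssubsets, S v) (w : Finset V) :
    S w ≤ ⨆ u ∈ J, S u := by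
  induction w using Finset.strongInduction with
  | H w ih =>
    by_cases hw : ∃ u ∈ J, w ⊆ u
    · obtain ⟨u, hu, hwu⟩ := hw
      exact le_iSup₂_of_le u hu (hmono hwu)
    · rw [hS w hw]
      exact iSup₂_le fun v hv => ih v (Finset.mem_ssubsets.1 hv)

/-- A monotone system of subfields of `K` whose field `S u` is algebraic over the fields below it
once `u` has at least two elements, and whose fields `S {i}` are independent over `S ∅`. The
independence is asked of each finite `u` against all vertices outside `u` together, with
algebraically closed base and left-hand side. -/
structure IsIndependentSystem (S : Finset V → Subfield K) : Prop where
  mono : Monotone S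
  le_algCl_iSup_ssubsets : ∀ u, 2 ≤ u.card → S u ≤ algCl (⨆ v ∈ u.ssubsets, S v)
  linearDisjointOver_compl : ∀ u, LinearDisjointOver (algCl (S ∅)) (algCl (S u))
    (algCl (S ∅) ⊔ ⨆ (i) (_ : i ∉ u), S {i})

namespace IsIndependentSystem

theorem algCl_le_algCl_inter_sup (h : IsIndependentSystem S) (u w : Finset V) :
    algCl (S w) ≤ algCl (algCl (S (w ∩ u)) ⊔ ⨆ i ∈ w \ u, S {i}) := by
  refine algCl_le_algCl_iff.2 <| (le_algCl_iSup_singleton h.le_algCl_iSup_ssubsets w).trans <|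
    algCl_mono (sup_le ?_ (iSup₂_le fun i hi => ?_))
  · exact le_sup_of_le_left ((h.mono (Finset.empty_subset _)).trans (le_algCl _))
  · by_cases hiu : i ∈ u
    · have hiwu : {i} ⊆ w ∩ u := Finset.singleton_subset_iff.2 (Finset.mem_inter.2 ⟨hi, hiu⟩)
      exact le_sup_of_le_left ((h.mono hiwu).trans (le_algCl _))
    · exact le_sup_of_le_right (le_iSup₂_of_le i (Finset.mem_sdiff.2 ⟨hi, hiu⟩) le_rfl)

theorem linearDisjointOver_iSup_algCl [IsAlgClosed K] (h : IsIndependentSystem S) (u : Finset V) :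
    LinearDisjointOver (⨆ v ∈ u.ssubsets, algCl (S v)) (algCl (S u))
      (⨆ (w) (_ : ¬ u ⊆ w), algCl (S w)) := by
  let Q : Subfield K := algCl (S ∅) ⊔ ⨆ (i) (_ : i ∉ u), S {i}
  let F (w : {w // ¬ u ⊆ w}) : Subfield K := algCl (S (↑w ∩ u))
  let G (w : {w // ¬ u ⊆ w}) : Subfield K := ⨆ i ∈ (w : Finset V) \ u, S {i}
  have G_le (w) : G w ≤ Q := le_sup_of_le_right
    (biSup_mono fun i hi => (Finset.mem_sdiff.1 hi).2)
  have disjoint : LinearDisjointOver (⨆ w, F w) (algCl (S u)) (⨆ w, algCl (F w ⊔ G w)) :=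
    (h.linearDisjointOver_compl u).iSup_algCl (algCl_mono (h.mono (Finset.empty_subset u)))
      le_sup_left (fun _ => algCl_mono (h.mono (Finset.empty_subset _)))
      (fun _ => algCl_mono (h.mono Finset.inter_subset_right)) G_le
  have iSup_F : ⨆ w, F w = ⨆ v ∈ u.ssubsets, algCl (S v) := by
    refine le_antisymm (iSup_le fun w => ?_) (iSup₂_le fun v hv => ?_)
    · refine le_iSup₂_of_le (↑w ∩ u) (Finset.mem_ssubsets.2 ?_) le_rfl
      exact Finset.inter_subset_right.ssubset_of_ne fun hw => w.2 (Finset.inter_eq_right.1 hw)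
    · have hvu : v ⊂ u := Finset.mem_ssubsets.1 hv
      exact le_iSup_of_le ⟨v, hvu.2⟩ (algCl_mono (h.mono (Finset.subset_inter le_rfl hvu.1)))
  rw [iSup_F] at disjoint
  refine disjoint.mono ?_ ?_ le_rfl ?_
  · exact iSup₂_le fun v hv => algCl_mono (h.mono (Finset.mem_ssubsets.1 hv).1)
  · exact biSup_mono fun v hv => (Finset.mem_ssubsets.1 hv).2
  · exact iSup₂_le fun w hw => le_iSup_of_le ⟨w, hw⟩ (h.algCl_le_algCl_inter_sup u w)

theorem linearDisjointOver_iSup_of_regular [IsAlgClosed K] (h : IsIndependentSystem S)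
    {u : Finset V} (hreg : LinearDisjointOver (⨆ v ∈ u.ssubsets, S v) (S u)
      (⨆ v ∈ u.ssubsets, algCl (S v))) :
    LinearDisjointOver (⨆ v ∈ u.ssubsets, S v) (S u) (⨆ (w) (_ : ¬ u ⊆ w), algCl (S w)) := by
  refine hreg.trans (h.linearDisjointOver_iSup_algCl u) ?_ ?_ ?_ ?_ (le_algCl _)
  · exact iSup₂_le fun v hv => h.mono (Finset.mem_ssubsets.1 hv).1
  · exact iSup₂_mono fun v _ => le_algCl (S v)
  · exact iSup₂_le fun v hv => algCl_mono (h.mono (Finset.mem_ssubsets.1 hv).1)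
  · exact biSup_mono fun v hv => (Finset.mem_ssubsets.1 hv).2

theorem exists_ringHom_extends [IsAlgClosed K] {L : Type*} [Field L] (h : IsIndependentSystem S)
    {J : Finset (Finset V)} {W : Set (Finset V)} (hJ2 : ∀ u ∈ J, 2 ≤ u.card)
    (hJanti : ∀ u ∈ J, ∀ v ∈ J, u ⊆ v → u = v)
    (hreg : ∀ u ∈ J, LinearDisjointOver (⨆ v ∈ u.ssubsets, S v) (S u)
      (⨆ v ∈ u.ssubsets, algCl (S v)))
    (hssub : ∀ u ∈ J, ∀ v, v ⊂ u → v ∈ W) (hnsub : ∀ u ∈ J, ∀ w ∈ W, ¬ u ⊆ w)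
    (f : ↥(⨆ w ∈ W, algCl (S w)) →+* L) (τ : ∀ u ∈ J, S u →+* L)
    (hτ : ∀ u hu x hx hx', x ∈ ⨆ v ∈ u.ssubsets, S v → τ u hu ⟨x, hx⟩ = f ⟨x, hx'⟩) :
    ∃ τ' : ↥((⨆ u ∈ J, S u) ⊔ ⨆ w ∈ W, algCl (S w)) →+* L,
      (∀ u hu x hx hx', τ' ⟨x, hx⟩ = τ u hu ⟨x, hx'⟩) ∧ ∀ x hx hx', τ' ⟨x, hx⟩ = f ⟨x, hx'⟩ := by
  have iSup_le_S (u) : ⨆ v ∈ u.ssubsets, S v ≤ S u :=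
    iSup₂_le fun v hv => h.mono (Finset.mem_ssubsets.1 hv).1
  have iSup_le_N (u) (hu : u ∈ J) : ⨆ v ∈ u.ssubsets, S v ≤ ⨆ w ∈ W, algCl (S w) :=
    iSup₂_le fun v hv =>
      le_iSup₂_of_le v (hssub u hu v (Finset.mem_ssubsets.1 hv)) (le_algCl _)
  have disjoint (u) (hu : u ∈ J) : LinearDisjointOver (⨆ v ∈ u.ssubsets, S v) (S u)
      ((⨆ v ∈ J.erase u, S v) ⊔ ⨆ w ∈ W, algCl (S w)) := by
    refine (h.linearDisjointOver_iSup_of_regular (hreg u hu)).mono (iSup_le_S u)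
      (le_sup_of_le_right (iSup_le_N u hu)) le_rfl (sup_le (iSup₂_le fun v hv => ?_) ?_)
    · obtain ⟨hvu, hv⟩ := Finset.mem_erase.1 hv
      exact le_iSup₂_of_le v (fun huv => hvu (hJanti u hu v hv huv).symm) (le_algCl _)
    · exact biSup_mono (hnsub u hu)
  exact exists_ringHom_biSup_sup (fun u _ => iSup_le_S u) iSup_le_N
    (fun u hu => h.le_algCl_iSup_ssubsets u (hJ2 u hu)) disjoint f τ
    fun u hu x hx => hτ u hu x _ _ hx

end IsIndependentSystem

theorem stochastic_independence_claim_general [IsAlgClosed K] {L : Type*} [Field L]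
    (h : IsIndependentSystem S) (J : Finset (Finset V)) (hJ2 : ∀ u ∈ J, 2 ≤ u.card)
    (hJanti : ∀ u ∈ J, ∀ v ∈ J, u ⊆ v → u = v)
    (hS : ∀ u, (¬ ∃ v ∈ J, u ⊆ v) → S u = ⨆ v ∈ u.ssubsets, S v)
    (hreg : ∀ u ∈ J, LinearDisjointOver (⨆ v ∈ u.ssubsets, S v) (S u)
      (⨆ v ∈ u.ssubsets, algCl (S v)))
    (f : ↥(⨆ v ∈ ({v : Finset V | ∃ u ∈ J, v ⊆ u} \ ↑J), algCl (S v)) →+* L)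
    (τ : ∀ u ∈ J, S u →+* L)
    (hτ : ∀ u hu x hx hx', x ∈ ⨆ v ∈ u.ssubsets, S v → τ u hu ⟨x, hx⟩ = f ⟨x, hx'⟩) :
    ∃ τ' : ↥((⨆ u ∈ J, S u) ⊔
        ⨆ v ∈ ({v : Finset V | ∃ u ∈ J, v ⊆ u} \ ↑J), algCl (S v)) →+* L,
      (∀ u hu x hx hx', τ' ⟨x, hx⟩ = τ u hu ⟨x, hx'⟩) ∧
      (∀ x hx hx', τ' ⟨x, hx⟩ = f ⟨x, hx'⟩) ∧
      ∀ w, ∃ τ'' : S w →+* L, ∀ u hu x hx hx', τ'' ⟨x, hx⟩ = τ u hu ⟨x, hx'⟩ := by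
  obtain ⟨τ', hτ'τ, hτ'f⟩ := h.exists_ringHom_extends
    (W := {v : Finset V | ∃ u ∈ J, v ⊆ u} \ ↑J) hJ2 hJanti hreg
    (fun u hu v hvu => ⟨⟨u, hu, hvu.1⟩, fun hv => hvu.ne (hJanti v hv u hu hvu.1)⟩)
    (fun u hu w ⟨⟨v, hv, hwv⟩, hwJ⟩ huw => by
      obtain rfl := hJanti u hu v hv (huw.trans hwv)
      exact hwJ (huw.antisymm hwv ▸ hu)) f τ hτ
  refine ⟨τ', hτ'τ, hτ'f, fun w => ?_⟩
  have le_domain : S w ≤ (⨆ u ∈ J, S u) ⊔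
      ⨆ v ∈ ({v : Finset V | ∃ u ∈ J, v ⊆ u} \ ↑J), algCl (S v) :=
    le_sup_of_le_left (le_iSup_of_eq_iSup_ssubsets h.mono hS w)
  exact ⟨τ'.comp (Subfield.inclusion le_domain), fun u hu x _ => hτ'τ u hu x _⟩

end IndependentSystems

section DifferenceFieldSystems

variable {K : Type*} [Field K] (σ : K ≃+* K) {E F : Subfield K}

theorem le_invCl (E : Subfield K) : E ≤ invCl σ E :=
  le_sInf fun _ hF => hF.1

variable {σ}

theorem invCl_eq_self (hE : E.map (σ : K →+* K) = E) : invCl σ E = E := by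
  refine le_antisymm (sInf_le ⟨le_rfl, fun x hx => ?_, fun x hx => ?_⟩) (le_invCl σ E)
  · exact hE.le ⟨x, hx, rfl⟩
  · obtain ⟨y, hy, rfl⟩ := hE.ge hx
    simpa using hy

theorem IsFiniteGaloisExt.le_algCl (h : IsFiniteGaloisExt F E) : E ≤ algCl F := by
  obtain ⟨hFE, hfin, -⟩ := h
  let : Algebra F E := (Subfield.inclusion hFE).toAlgebra
  exact fun x hx => mem_algCl.2 ((Algebra.IsAlgebraic.isAlgebraic (⟨x, hx⟩ : E)).ringHom_of_comp_eq
    (RingHom.id F) E.subtype Function.injective_id rfl)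

variable {V : Type*} [Fintype V] [DecidableEq V] {A : Subfield K}

theorem DiffFieldSystem.isIndependentSystem (𝒮 : DiffFieldSystem σ V A)
    (hA : A.map (σ : K →+* K) = A) : IsIndependentSystem 𝒮.S := by
  have halg (u : Finset V) (hu : 2 ≤ u.card) : 𝒮.S u ≤ algCl (⨆ v ∈ u.ssubsets, 𝒮.S v) :=
    (𝒮.galois u hu).le_algCl
  refine ⟨fun _ _ => 𝒮.mono, halg, fun u => ?_⟩
  have hind := 𝒮.indep u uᶜ disjoint_compl_right
  rw [IndependentOver, invCl_eq_self hA] at hind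
  rw [𝒮.empty_eq]
  refine hind.mono (algCl_mono (𝒮.empty_eq.ge.trans (𝒮.mono (Finset.empty_subset u))))
    le_sup_left ?_ (sup_le ?_ ?_)
  · refine algCl_le_algCl_iff.2 ((le_algCl_iSup_singleton halg u).trans (algCl_mono ?_))
    rw [𝒮.empty_eq]
    exact le_sup_left.trans (le_invCl σ _)
  · exact algCl_mono (le_sup_right.trans (le_invCl σ _))
  · refine iSup₂_le fun i hi => le_trans ?_ ((le_invCl σ _).trans (le_algCl _))
    refine le_sup_of_le_left (le_sup_of_le_right ?_)
    exact le_iSup₂_of_le i (Finset.mem_compl.2 hi) le_rfl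

end DifferenceFieldSystems

/-- (Claim in the proof of the Stochastic Independence Theorem.)
Let `J` be an antichain on `V` of sets of size `≥ 2` with `⋃J = V`, `I` the
simplicial complex generated by `J`, and `𝒮` a regular `I`-system. Given, for
each `u ∈ J`, a ring homomorphism `τ_u : S(u) → S(u)` agreeing with `σ` on
`S(u)⁻`, there is a ring homomorphism `τ` on the compositum
`∏_{u∈J} S(u) · ∏_{v∈I\J} S(v)^{alg}` restricting to each `τ_u` and to `σ` on
`∏_{v∈I\J} S(v)^{alg}`; in particular the `τ_u` have a common extension to
`S(V)`. -/
theorem stochastic_independence_claim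
    {K : Type*} [Field K] [IsAlgClosed K] (σ : K ≃+* K)
    {V : Type*} [Fintype V] [DecidableEq V]
    (A : Subfield K) (hAperf : PerfectField A) (hAinv : A.map (σ : K →+* K) = A)
    (J : Finset (Finset V))
    (hJ2 : ∀ u ∈ J, 2 ≤ u.card)
    (hJanti : ∀ u ∈ J, ∀ v ∈ J, u ⊆ v → u = v)
    (hJcover : ∀ i : V, ∃ u ∈ J, i ∈ u)
    (𝒮 : DiffFieldSystem σ V A)
    (h𝒮 : 𝒮.IsOn {v : Finset V | ∃ u ∈ J, v ⊆ u})
    (hreg : 𝒮.Regular)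
    (τ : (u : Finset V) → u ∈ J → (↥(𝒮.S u) →+* ↥(𝒮.S u)))
    (hτ : ∀ (u : Finset V) (hu : u ∈ J) (x : K) (hx : x ∈ 𝒮.S u),
      x ∈ 𝒮.Sminus u → ((τ u hu ⟨x, hx⟩ : ↥(𝒮.S u)) : K) = σ x) :
    ∃ τ' : ↥((⨆ u ∈ J, 𝒮.S u) ⊔
        ⨆ v ∈ ({v : Finset V | ∃ u ∈ J, v ⊆ u} \ ↑J), algCl (𝒮.S v)) →+* K,
      (∀ (u : Finset V) (hu : u ∈ J) (x : K)
          (hxb : x ∈ (⨆ u ∈ J, 𝒮.S u) ⊔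
            ⨆ v ∈ ({v : Finset V | ∃ u ∈ J, v ⊆ u} \ ↑J), algCl (𝒮.S v))
          (hxu : x ∈ 𝒮.S u),
        τ' ⟨x, hxb⟩ = ((τ u hu ⟨x, hxu⟩ : ↥(𝒮.S u)) : K)) ∧
      (∀ (x : K)
          (hxb : x ∈ (⨆ u ∈ J, 𝒮.S u) ⊔
            ⨆ v ∈ ({v : Finset V | ∃ u ∈ J, v ⊆ u} \ ↑J), algCl (𝒮.S v)),
        x ∈ (⨆ v ∈ ({v : Finset V | ∃ u ∈ J, v ⊆ u} \ ↑J), algCl (𝒮.S v)) →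
          τ' ⟨x, hxb⟩ = σ x) ∧
      ∃ τ'' : ↥(𝒮.S Finset.univ) →+* K,
        ∀ (u : Finset V) (hu : u ∈ J) (x : K)
          (hxV : x ∈ 𝒮.S Finset.univ) (hxu : x ∈ 𝒮.S u),
          τ'' ⟨x, hxV⟩ = ((τ u hu ⟨x, hxu⟩ : ↥(𝒮.S u)) : K) := by
  obtain ⟨τ', hτ'τ, hτ'σ, hτ''⟩ := stochastic_independence_claim_general
    (𝒮.isIndependentSystem hAinv) J hJ2 hJanti h𝒮
    (fun u hu => hreg u (Finset.card_pos.1 (zero_lt_two.trans_le (hJ2 u hu))).ne_empty)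
    ((σ : K →+* K).comp (Subfield.subtype _)) (fun u hu => (𝒮.S u).subtype.comp (τ u hu))
    (fun u hu x hx _ => hτ u hu x hx)
  exact ⟨τ', hτ'τ, hτ'σ, hτ'' Finset.univ⟩
end

section
/- Let n ≥ 2 and let X₁, …, X_n be finite nonempty sets; write X = ∏ᵢ Xᵢ. Let φ ⊆ X, δ = |φ|/|X|, and f = 1_φ − δ (as a real-valued function on X). Let ε ≥ 0 and assume that for every family (W_v) of subsets W_v ⊆ ∏_{i∈v} Xᵢ indexed by the nonempty proper subsets v of {1,…,n}, one has | ∑_{x ∈ X with x|_v ∈ W_v for all such v} f(x) | ≤ ε·|X|. Then ∑_{x⁰, x¹ ∈ X} ∏_{ι ∈ {0,1}ⁿ} f(x^ι) ≤ 2^{2ⁿ} · ε · |X|², where x^ι ∈ X has i-th coordinate (x^{ι(i)})ᵢ. (The Cartesian-product case of the proposition that edge-uniformity implies quasirandomness.) -/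
/-!
Fix `x¹`. Splitting `1_φ - δ = (1 - δ) · 1_φ - δ · 1_{φᶜ}` at every corner of the box other than
`x⁰` writes the sum over `x⁰` as a combination of sums `∑ f(x⁰) ∏ 1_{A_v}(x^v)`, in which `x^v`
depends on `x⁰` only through `x⁰|_v` for a proper subset `v`. Each of these is a chain sum, or zero
when the condition at the corner `x¹` fails, and the absolute values of the coefficients add up to
`((1 - δ) + δ) ^ (2 ^ n - 1) = 1`.
-/

open Finset Function

theorem prod_ite_eq_sum_powerset {ι R : Type*} [CommSemiring R] [DecidableEq ι] (s : Finset ι)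
    (p : ι → Prop) [DecidablePred p] (a b : ι → R) :
    ∏ i ∈ s, (if p i then a i else b i) =
      ∑ t ∈ s.powerset,
        if ∀ i ∈ s, (p i ↔ i ∈ t) then (∏ i ∈ t, a i) * ∏ i ∈ s \ t, b i else 0 := by
  have hfilter (t) (ht : t ∈ s.powerset) : (∀ i ∈ s, (p i ↔ i ∈ t)) ↔ s.filter p = t := by
    grind
  rw [sum_congr rfl fun t ht => if_congr (hfilter t ht) rfl rfl, sum_ite_eq,
    if_pos (mem_powerset.2 (filter_subset p s)), prod_ite, filter_not]

section ChainSet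

variable {I : Type*} [Fintype I] {X : I → Type*}

/-- The chain set cut out by a family `W` of relations on the subproducts of `∏ i, X i`. The sets
`W ∅` and `W univ` are ignored. -/
def chainSet (W : (v : Finset I) → Set ((i : {j // j ∈ v}) → X i)) : Set (∀ i, X i) :=
  {x | ∀ v : Finset I, v.Nonempty → v ≠ univ → v.restrict x ∈ W v}

variable [DecidableEq I]

/-- `f` is edge-uniform with error `C`: every chain sum of `f` is at most `C` in absolute value.
The error is not normalized by the size of the product. -/
def IsEdgeUniform [∀ i, Fintype (X i)] (f : (∀ i, X i) → ℝ) (C : ℝ) : Prop :=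
  ∀ W, |∑ x, (chainSet W).indicator f x| ≤ C

theorem chainSet_preimage_updateFinset {x₁ : ∀ i, X i} {A : Finset I → Set (∀ i, X i)}
    (hx₁ : (∅ : Finset I) ≠ univ → x₁ ∈ A ∅) :
    chainSet (fun v => updateFinset x₁ v ⁻¹' A v) =
      {x₀ | ∀ v ≠ univ, updateFinset x₁ v (v.restrict x₀) ∈ A v} := by
  ext x₀
  refine ⟨fun h v hv => ?_, fun h v _ hv => h v hv⟩
  rcases v.eq_empty_or_nonempty with rfl | hne
  · simpa only [updateFinset_empty] using hx₁ hv
  · exact h v hne hv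

end ChainSet

namespace IsEdgeUniform

variable {I : Type*} [Fintype I] [DecidableEq I] {X : I → Type*} [∀ i, Fintype (X i)]
  {f : (∀ i, X i) → ℝ} {C : ℝ}

theorem nonneg (hf : IsEdgeUniform f C) : 0 ≤ C :=
  (abs_nonneg _).trans (hf fun _ => ∅)

theorem abs_sum_indicator_le (hf : IsEdgeUniform f C) (x₁ : ∀ i, X i)
    (A : Finset I → Set (∀ i, X i)) :
    |∑ x₀, {x₀ | ∀ v ≠ univ, updateFinset x₁ v (v.restrict x₀) ∈ A v}.indicator f x₀| ≤ C := by
  by_cases hx₁ : (∅ : Finset I) ≠ univ → x₁ ∈ A ∅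
  · rw [← chainSet_preimage_updateFinset hx₁]
    exact hf _
  · obtain ⟨hne, hx₁⟩ := Classical.not_imp.1 hx₁
    have hempty : {x₀ | ∀ v ≠ univ, updateFinset x₁ v (v.restrict x₀) ∈ A v} = ∅ :=
      Set.eq_empty_of_forall_notMem fun x₀ h => hx₁ <| by
        simpa only [updateFinset_empty] using h ∅ hne
    simpa [hempty] using hf.nonneg

theorem abs_sum_mul_prod_ite_le (hf : IsEdgeUniform f C) (x₁ : ∀ i, X i)
    (A : Finset I → Set (∀ i, X i)) [∀ v, DecidablePred (· ∈ A v)] (a b : Finset I → ℝ) :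
    |∑ x₀, f x₀ * ∏ v ∈ univ.erase univ,
      (if updateFinset x₁ v (v.restrict x₀) ∈ A v then a v else b v)| ≤
      C * ∏ v ∈ univ.erase univ, (|a v| + |b v|) := by
  set s : Finset (Finset I) := univ.erase univ
  let B (t : Finset (Finset I)) : Set (∀ i, X i) :=
    {x₀ | ∀ v ≠ univ, updateFinset x₁ v (v.restrict x₀) ∈ {x | x ∈ A v ↔ v ∈ t}}
  have hexpand (x₀ : ∀ i, X i) :
      f x₀ * ∏ v ∈ s, (if updateFinset x₁ v (v.restrict x₀) ∈ A v then a v else b v) =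
        ∑ t ∈ s.powerset, ((∏ v ∈ t, a v) * ∏ v ∈ s \ t, b v) * (B t).indicator f x₀ := by
    rw [prod_ite_eq_sum_powerset, mul_sum]
    refine sum_congr rfl fun t _ => ?_
    simp [B, s, Set.indicator_apply, mul_comm]
  calc |∑ x₀, f x₀ * ∏ v ∈ s,
          (if updateFinset x₁ v (v.restrict x₀) ∈ A v then a v else b v)|
      = |∑ t ∈ s.powerset, ((∏ v ∈ t, a v) * ∏ v ∈ s \ t, b v) *
          ∑ x₀, (B t).indicator f x₀| := by
        simp only [hexpand, mul_sum]
        rw [sum_comm]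
    _ ≤ ∑ t ∈ s.powerset, ((∏ v ∈ t, |a v|) * ∏ v ∈ s \ t, |b v|) * C := by
        refine (abs_sum_le_sum_abs _ _).trans (sum_le_sum fun t _ => ?_)
        simp only [abs_mul, abs_prod]
        gcongr
        exact hf.abs_sum_indicator_le x₁ fun v => {x | x ∈ A v ↔ v ∈ t}
    _ = C * ∏ v ∈ s, (|a v| + |b v|) := by rw [← sum_mul, ← prod_add, mul_comm]

end IsEdgeUniform

section BoxCorners

variable {I : Type*} [Fintype I] [DecidableEq I] {X : I → Type*}

theorem prod_ite_bool_eq_prod_updateFinset {M : Type*} [CommMonoid M] (g : (∀ i, X i) → M)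
    (x₀ x₁ : ∀ i, X i) :
    ∏ ω : I → Bool, g (fun i => if ω i then x₁ i else x₀ i) =
      ∏ v : Finset I, g (updateFinset x₁ v (v.restrict x₀)) := by
  refine prod_nbij' (fun ω => univ.filter fun i => ω i = false) (fun v i => decide (i ∉ v))
    (fun _ _ => mem_univ _) (fun _ _ => mem_univ _) (fun ω _ => ?_) (fun v _ => ?_) (fun ω _ => ?_)
  · ext i
    simp
  · ext i
    simp
  · congr 1
    ext i
    cases hi : ω i <;> simp [updateFinset, hi]

theorem edge_uniformity_implies_quasirandomness_general [∀ i, Fintype (X i)]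
    [∀ i, DecidableEq (X i)] (φ : Finset (∀ i, X i)) {δ C : ℝ} (hδ₀ : 0 ≤ δ) (hδ₁ : δ ≤ 1)
    (hf : IsEdgeUniform (fun x => (if x ∈ φ then (1 : ℝ) else 0) - δ) C) :
    |∑ x₀ : ∀ i, X i, ∑ x₁ : ∀ i, X i, ∏ ω : I → Bool,
        ((if (fun i => if ω i then x₁ i else x₀ i) ∈ φ then (1 : ℝ) else 0) - δ)| ≤
      C * ∏ i, (Fintype.card (X i) : ℝ) := by
  have hfibre (x₁ : ∀ i, X i) : |∑ x₀ : ∀ i, X i, ∏ ω : I → Bool,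
      ((if (fun i => if ω i then x₁ i else x₀ i) ∈ φ then (1 : ℝ) else 0) - δ)| ≤ C := by
    have hcoeff : |1 - δ| + |0 - δ| = 1 := by
      rw [abs_of_nonneg (sub_nonneg.2 hδ₁), zero_sub, abs_neg, abs_of_nonneg hδ₀, sub_add_cancel]
    have hcorner (x₀ : ∀ i, X i) : updateFinset x₁ univ (univ.restrict x₀) = x₀ := by
      ext i
      simp [updateFinset]
    have hbound := hf.abs_sum_mul_prod_ite_le x₁ (fun _ => φ) (fun _ => 1 - δ) (fun _ => 0 - δ)
    rw [prod_eq_one fun _ _ => hcoeff, mul_one] at hbound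
    convert hbound using 3 with x₀
    rw [prod_ite_bool_eq_prod_updateFinset (fun x => (if x ∈ φ then (1 : ℝ) else 0) - δ),
      ← mul_prod_erase univ _ (mem_univ univ), hcorner]
    simp only [ite_sub, mem_coe]
  rw [sum_comm]
  calc _ ≤ ∑ _x₁ : ∀ i, X i, C :=
        (abs_sum_le_sum_abs _ _).trans (sum_le_sum fun x₁ _ => hfibre x₁)
    _ = C * ∏ i, (Fintype.card (X i) : ℝ) := by
        simp [Fintype.card_pi, mul_comm]

end BoxCorners

/-- (Cartesian-product case of "edge-uniformity implies
quasirandomness".) If `f = 1_φ − |φ|/|X|` has all its chain sums bounded by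
`ε·|X|`, then the `2ⁿ`-th power of its Gowers box norm is at most
`2^{2ⁿ}·ε·|X|²`. -/
theorem edge_uniformity_implies_quasirandomness (n : ℕ) (hn : 2 ≤ n)
    (X : Fin n → Type*) [∀ i, Fintype (X i)] [∀ i, DecidableEq (X i)]
    [∀ i, Nonempty (X i)]
    (φ : Finset (∀ i, X i)) (ε : ℝ) (hε : 0 ≤ ε)
    (huniform : ∀ W : (v : Finset (Fin n)) → Set ((i : {j // j ∈ v}) → X i.1),
      |∑ x : ∀ i, X i,
          ({x : ∀ i, X i | ∀ v : Finset (Fin n), v.Nonempty → v ≠ Finset.univ →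
              (fun i : {j // j ∈ v} => x i.1) ∈ W v} : Set (∀ i, X i)).indicator
            (fun x => (if x ∈ φ then (1 : ℝ) else 0) -
              (φ.card : ℝ) / ∏ i, (Fintype.card (X i) : ℝ)) x|
        ≤ ε * ∏ i, (Fintype.card (X i) : ℝ)) :
    ∑ x0 : ∀ i, X i, ∑ x1 : ∀ i, X i,
        ∏ ι : Fin n → Bool,
          ((if (fun i => if ι i then x1 i else x0 i) ∈ φ then (1 : ℝ) else 0) -
            (φ.card : ℝ) / ∏ i, (Fintype.card (X i) : ℝ))
      ≤ 2 ^ (2 ^ n) * ε * (∏ i, (Fintype.card (X i) : ℝ)) ^ 2 := by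
  have hδ : (φ.card : ℝ) / ∏ i, (Fintype.card (X i) : ℝ) ≤ 1 := by
    refine div_le_one_of_le₀ ?_ (by positivity)
    exact_mod_cast φ.card_le_univ.trans_eq Fintype.card_pi
  calc _ ≤ ε * (∏ i, (Fintype.card (X i) : ℝ)) * ∏ i, (Fintype.card (X i) : ℝ) :=
        (le_abs_self _).trans <|
          edge_uniformity_implies_quasirandomness_general φ (by positivity) hδ huniform
    _ = 1 * ε * (∏ i, (Fintype.card (X i) : ℝ)) ^ 2 := by ring
    _ ≤ 2 ^ (2 ^ n) * ε * (∏ i, (Fintype.card (X i) : ℝ)) ^ 2 := by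
        gcongr
        exact one_le_pow₀ one_le_two
end
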